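/- For every integer n ≥ 1 and every proper cone C in a finite-dimensional real vector space, both pairs (L_n, C) and (C, L_n) are resilient, where L_n is the Lorentz cone. In particular, the Lorentz cone L_n is resilient for every n ≥ 1. -/

import Mathlib

open scoped TensorProduct
open Set

noncomputable section

/-- The dual cone of a set `C`, inside the algebraic dual space. -/
def dualConeSet {V : Type*} [AddCommGroup V] [Module ℝ V] (C : Set V) :
    Set (Module.Dual ℝ V) := {φ | ∀ x ∈ C, 0 ≤ φ x}

/-- A proper cone: a closed convex cone which is generating (`C - C = V`) and
pointed (`C ∩ (-C) = {0}`). -/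
def IsProperCone {V : Type*} [NormedAddCommGroup V] [NormedSpace ℝ V] (C : Set V) : Prop :=
  IsClosed C ∧ Convex ℝ C ∧ (∀ ⦃c : ℝ⦄, 0 < c → ∀ ⦃x⦄, x ∈ C → c • x ∈ C) ∧
    (∀ v : V, ∃ x ∈ C, ∃ y ∈ C, v = x - y) ∧ C ∩ (-C) = {0}

/-- `(C₁,C₂)`-entanglement breaking maps. -/
def IsEntanglementBreaking {V₁ V₂ : Type*} [AddCommGroup V₁] [Module ℝ V₁]
    [AddCommGroup V₂] [Module ℝ V₂] (C₁ : Set V₁) (C₂ : Set V₂) (P : V₁ →ₗ[ℝ] V₂) : Prop :=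
  ∃ (m : ℕ) (φ : Fin m → Module.Dual ℝ V₁) (x : Fin m → V₂),
    (∀ i, φ i ∈ dualConeSet C₁) ∧ (∀ i, x i ∈ C₂) ∧ ∀ v, P v = ∑ i, φ i v • x i

/-- The `k`-fold minimal tensor power of a cone. -/
def minTensorPow {V : Type*} [AddCommGroup V] [Module ℝ V] (C : Set V) (k : ℕ) :
    Set (⨂[ℝ] _ : Fin k, V) :=
  convexHull ℝ {z | ∃ x : Fin k → V, (∀ i, x i ∈ C) ∧ z = PiTensorProduct.tprod ℝ x}

/-- The functional on the `k`-fold tensor power induced by a family of functionals,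
`x₁ ⊗ ⋯ ⊗ x_k ↦ ∏ i, φ i (x i)`. -/
def dualPairing {V : Type*} [AddCommGroup V] [Module ℝ V] {k : ℕ}
    (φ : Fin k → Module.Dual ℝ V) : (⨂[ℝ] _ : Fin k, V) →ₗ[ℝ] ℝ :=
  PiTensorProduct.lift ((MultilinearMap.mkPiAlgebra ℝ (Fin k) ℝ).compLinearMap φ)

/-- The `k`-fold maximal tensor power of a cone: the dual of the minimal tensor power of
the dual cone, under the canonical identification of `(V^{⊗k})*` with `(V*)^{⊗k}`. -/
def maxTensorPow {V : Type*} [AddCommGroup V] [Module ℝ V] (C : Set V) (k : ℕ) :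
    Set (⨂[ℝ] _ : Fin k, V) :=
  {z | ∀ φ : Fin k → Module.Dual ℝ V, (∀ i, φ i ∈ dualConeSet C) → 0 ≤ dualPairing φ z}

/-- `(C₁,C₂)`-entanglement annihilating maps: `P^{⊗k}` maps the `k`-fold maximal tensor power
of `C₁` into the `k`-fold minimal tensor power of `C₂`, for every `k ≥ 1`. -/
def IsEntanglementAnnihilating {V₁ V₂ : Type*} [AddCommGroup V₁] [Module ℝ V₁]
    [AddCommGroup V₂] [Module ℝ V₂] (C₁ : Set V₁) (C₂ : Set V₂) (P : V₁ →ₗ[ℝ] V₂) : Prop :=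
  ∀ k : ℕ, 1 ≤ k →
    Set.MapsTo (⇑(PiTensorProduct.map fun _ : Fin k => P))
      (maxTensorPow C₁ k) (minTensorPow C₂ k)

/-- A pair of cones is resilient if every entanglement annihilating map between them is
entanglement breaking. -/
def IsResilientPair {V₁ V₂ : Type*} [AddCommGroup V₁] [Module ℝ V₁]
    [AddCommGroup V₂] [Module ℝ V₂] (C₁ : Set V₁) (C₂ : Set V₂) : Prop :=
  ∀ P : V₁ →ₗ[ℝ] V₂, IsEntanglementAnnihilating C₁ C₂ P → IsEntanglementBreaking C₁ C₂ P

/-- The minimal tensor product of two cones. -/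
def minTensor {V W : Type*} [AddCommGroup V] [Module ℝ V] [AddCommGroup W] [Module ℝ W]
    (C : Set V) (D : Set W) : Set (V ⊗[ℝ] W) :=
  convexHull ℝ {z | ∃ x ∈ C, ∃ y ∈ D, z = x ⊗ₜ[ℝ] y}

/-- The maximal tensor product of two cones: the dual of the minimal tensor product of the
dual cones, under the canonical identification of `(V ⊗ W)*` with `V* ⊗ W*`. -/
def maxTensor {V W : Type*} [AddCommGroup V] [Module ℝ V] [AddCommGroup W] [Module ℝ W]
    (C : Set V) (D : Set W) : Set (V ⊗[ℝ] W) :=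
  {z | ∀ φ ∈ dualConeSet C, ∀ ψ ∈ dualConeSet D,
      0 ≤ TensorProduct.dualDistrib ℝ V W (φ ⊗ₜ[ℝ] ψ) z}

/-- The Lorentz cone `L_n ⊆ ℝ ⊕ ℝⁿ`. -/
def lorentzCone (n : ℕ) : Set (ℝ × EuclideanSpace ℝ (Fin n)) := {p | ‖p.2‖ ≤ p.1}

/-!
A map that is not entanglement breaking is separated from the closed cone of entanglement breaking
maps by a functional `P ↦ tr (Q ∘ P)` with `Q` positive. If `P` is entanglement annihilating and one
of its two cones is `L_n`, then `Q ∘ P` or `P ∘ Q` is entanglement annihilating from `L_n` to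
itself, so it suffices that such a map `T` has nonnegative trace.

Averaging over sign changes of the space coordinates preserves the trace and makes `T` diagonal,
with entries `a, b₁, …, bₙ`. Take real `N × N` matrices `Γ y`, linear in `y ∈ ℝⁿ`, with
`(Γ y)ᵀ Γ y = ‖y‖² • 1`. The entries of `Γ y₁ ⋯ Γ y_k` are multilinear forms bounded by
`‖y₁‖ ⋯ ‖y_k‖`, so they give elements of the `k`-fold maximal tensor power of `L_n` and functionals
nonnegative on the minimal one. Pairing them through `T^{⊗k}` and summing over a column yields
`(∑ b_j)^k ≤ N a^k` for all `k`, where `N` does not depend on `k`. Hence `|∑ b_j| ≤ a`.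
-/

/-! ### Tensor powers of cones -/

section TensorPowers

variable {V W V₀ V₁ V₂ V₃ : Type*} [AddCommGroup V] [Module ℝ V] [AddCommGroup W] [Module ℝ W]
  [AddCommGroup V₀] [Module ℝ V₀] [AddCommGroup V₁] [Module ℝ V₁] [AddCommGroup V₂] [Module ℝ V₂]
  [AddCommGroup V₃] [Module ℝ V₃] {C : Set V} {D : Set W} {C₀ : Set V₀} {C₁ : Set V₁}
  {C₂ : Set V₂} {C₃ : Set V₃} {P : V₁ →ₗ[ℝ] V₂} {k : ℕ}

/-- The bipolar of a set: the vectors on which all functionals of the dual cone are nonnegative.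
A map into the bipolar of `C` is what positivity against `dualConeSet C` amounts to. -/
def bipolar (C : Set V) : Set V := {x | ∀ φ ∈ dualConeSet C, 0 ≤ φ x}

theorem subset_bipolar : C ⊆ bipolar C := fun _ hx _ hφ => hφ _ hx

theorem dualPairing_tprod (φ : Fin k → Module.Dual ℝ V) (x : Fin k → V) :
    dualPairing φ (PiTensorProduct.tprod ℝ x) = ∏ i, φ i (x i) := by
  simp [dualPairing]

theorem dualPairing_map (φ : Fin k → Module.Dual ℝ W) (A : Fin k → V →ₗ[ℝ] W)
    (z : ⨂[ℝ] _ : Fin k, V) :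
    dualPairing φ (PiTensorProduct.map A z) = dualPairing (fun i => φ i ∘ₗ A i) z := by
  rw [dualPairing, ← LinearMap.comp_apply, PiTensorProduct.lift_comp_map]
  rfl

theorem nonneg_of_mem_minTensorPow {f : (⨂[ℝ] _ : Fin k, V) →ₗ[ℝ] ℝ}
    (hf : ∀ x : Fin k → V, (∀ i, x i ∈ C) → 0 ≤ f (PiTensorProduct.tprod ℝ x))
    {z : ⨂[ℝ] _ : Fin k, V} (hz : z ∈ minTensorPow C k) : 0 ≤ f z := by
  have hsub : minTensorPow C k ⊆ f ⁻¹' Ici 0 := by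
    refine convexHull_min ?_ ((convex_Ici 0).linear_preimage f)
    rintro _ ⟨x, hx, rfl⟩
    exact hf x hx
  exact hsub hz

theorem mapsTo_map_minTensorPow {A : Fin k → V →ₗ[ℝ] W} (hA : ∀ i, MapsTo (A i) C D) :
    MapsTo (PiTensorProduct.map A) (minTensorPow C k) (minTensorPow D k) := by
  refine convexHull_min ?_ ((convex_convexHull ℝ _).linear_preimage (PiTensorProduct.map A))
  rintro _ ⟨x, hx, rfl⟩
  exact subset_convexHull ℝ _ ⟨fun i => A i (x i), fun i => hA i (hx i),
    PiTensorProduct.map_tprod A x⟩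

theorem mapsTo_map_maxTensorPow {A : Fin k → V →ₗ[ℝ] W} (hA : ∀ i, MapsTo (A i) C (bipolar D)) :
    MapsTo (PiTensorProduct.map A) (maxTensorPow C k) (maxTensorPow D k) := by
  intro z hz φ hφ
  rw [dualPairing_map]
  exact hz _ fun i x hx => hA i hx _ (hφ i)

namespace IsEntanglementAnnihilating

theorem mapsTo_map_comp (hP : IsEntanglementAnnihilating C₁ C₂ P) (hk : 1 ≤ k)
    {A : Fin k → V₂ →ₗ[ℝ] V₃} (hA : ∀ i, MapsTo (A i) C₂ C₃)
    {B : Fin k → V₀ →ₗ[ℝ] V₁} (hB : ∀ i, MapsTo (B i) C₀ (bipolar C₁)) :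
    MapsTo (PiTensorProduct.map fun i => A i ∘ₗ P ∘ₗ B i)
      (maxTensorPow C₀ k) (minTensorPow C₃ k) := by
  rw [PiTensorProduct.map_comp, PiTensorProduct.map_comp]
  exact (mapsTo_map_minTensorPow hA).comp ((hP k hk).comp (mapsTo_map_maxTensorPow hB))

theorem comp_left (hP : IsEntanglementAnnihilating C₁ C₂ P) {A : V₂ →ₗ[ℝ] V₃}
    (hA : MapsTo A C₂ C₃) : IsEntanglementAnnihilating C₁ C₃ (A ∘ₗ P) := fun _ hk =>
  hP.mapsTo_map_comp hk (fun _ => hA) (B := fun _ => LinearMap.id) fun _ _ hx => subset_bipolar hx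

theorem comp_right (hP : IsEntanglementAnnihilating C₁ C₂ P) {B : V₀ →ₗ[ℝ] V₁}
    (hB : MapsTo B C₀ (bipolar C₁)) : IsEntanglementAnnihilating C₀ C₂ (P ∘ₗ B) := fun _ hk =>
  hP.mapsTo_map_comp hk (A := fun _ => LinearMap.id) (fun _ => mapsTo_id _) fun _ => hB

theorem sum_smul_comp {ι : Type*} [Fintype ι] (hP : IsEntanglementAnnihilating C₁ C₂ P)
    {A : ι → V₂ →ₗ[ℝ] V₃} (hA : ∀ j, MapsTo (A j) C₂ C₃)
    {B : ι → V₀ →ₗ[ℝ] V₁} (hB : ∀ j, MapsTo (B j) C₀ (bipolar C₁))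
    {w : ι → ℝ} (hw₀ : ∀ j, 0 ≤ w j) (hw₁ : ∑ j, w j = 1) :
    IsEntanglementAnnihilating C₀ C₃ (∑ j, w j • (A j ∘ₗ P ∘ₗ B j)) := by
  classical
  intro k hk z hz
  have expand : PiTensorProduct.map (fun _ : Fin k => ∑ j, w j • (A j ∘ₗ P ∘ₗ B j)) =
      ∑ r : Fin k → ι, (∏ i, w (r i)) •
        PiTensorProduct.map fun i => A (r i) ∘ₗ P ∘ₗ B (r i) := by
    simp only [← PiTensorProduct.mapMultilinear_apply, MultilinearMap.map_sum,
      MultilinearMap.map_smul_univ]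
  rw [expand, LinearMap.sum_apply]
  refine (convex_convexHull ℝ _).sum_mem (fun r _ => Finset.prod_nonneg fun i _ => hw₀ _) ?_
    fun r _ => hP.mapsTo_map_comp hk (fun i => hA (r i)) (fun i => hB (r i)) hz
  rw [← Fintype.sum_pow, hw₁, one_pow]

theorem averageMap {G : Type*} [Group G] [Fintype G] [Invertible (Fintype.card G : ℝ)]
    (hP : IsEntanglementAnnihilating C₁ C₂ P) {ρ : Representation ℝ G V₁}
    {σ : Representation ℝ G V₂} (hρ : ∀ g, MapsTo (ρ g) C₁ C₁) (hσ : ∀ g, MapsTo (σ g) C₂ C₂) :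
    IsEntanglementAnnihilating C₁ C₂ ((Representation.linHom ρ σ).averageMap P) := by
  have expand : (Representation.linHom ρ σ).averageMap P =
      ∑ g, (Fintype.card G : ℝ)⁻¹ • (σ g ∘ₗ P ∘ₗ ρ g⁻¹) := by
    simp [GroupAlgebra.average, Finset.smul_sum]
  rw [expand]
  refine hP.sum_smul_comp hσ (fun g x hx => subset_bipolar (hρ g⁻¹ hx))
    (fun _ => by positivity) ?_
  simp

end IsEntanglementAnnihilating

end TensorPowers

theorem trace_averageMap_linHom {k G V : Type*} [CommRing k] [Group G] [Fintype G]
    [Invertible (Fintype.card G : k)] [AddCommGroup V] [Module k V]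
    (ρ : Representation k G V) (P : V →ₗ[k] V) :
    LinearMap.trace k V ((Representation.linHom ρ ρ).averageMap P) = LinearMap.trace k V P := by
  have conj (g : G) : LinearMap.trace k V (ρ g ∘ₗ P ∘ₗ ρ g⁻¹) = LinearMap.trace k V P := by
    have hg : ρ g⁻¹ * ρ g = 1 := by rw [← map_mul, inv_mul_cancel, map_one]
    change LinearMap.trace k V (ρ g * (P * ρ g⁻¹)) = _
    rw [LinearMap.trace_mul_comm, mul_assoc, hg, mul_one]
  simp [GroupAlgebra.average, conj]

/-! ### Clifford matrices -/

section CliffordMatrices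

open Matrix

theorem exists_isSymm_mul_self_eq_dotProduct_smul_one (R : Type*) [CommRing R] (n : ℕ) :
    ∃ (ι : Type) (_ : Fintype ι) (_ : DecidableEq ι) (_ : Nonempty ι)
      (Γ : (Fin n → R) →ₗ[R] Matrix ι ι R), ∀ x, (Γ x).IsSymm ∧ Γ x * Γ x = (x ⬝ᵥ x) • 1 := by
  induction n with
  | zero =>
    exact ⟨Unit, inferInstance, inferInstance, inferInstance, 0, fun x => by
      simp [Matrix.IsSymm, dotProduct]⟩
  | succ n ih =>
    obtain ⟨ι, _, _, _, Γ, hΓ⟩ := ih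
    refine ⟨ι ⊕ ι, inferInstance, inferInstance, inferInstance,
      { toFun := fun x => fromBlocks (Γ (vecTail x)) (x 0 • 1) (x 0 • 1) (-Γ (vecTail x))
        map_add' := fun x y => ?_
        map_smul' := fun c x => ?_ }, fun x => ⟨?_, ?_⟩⟩
    · simp [fromBlocks_add, add_smul, tail_add, add_comm]
    · have hx : vecTail (c • x) = c • vecTail x := rfl
      simp [fromBlocks_smul, smul_smul, hx]
    · simp [IsSymm, fromBlocks_transpose, (hΓ (vecTail x)).1.eq]
    · have hx : x ⬝ᵥ x = x 0 * x 0 + vecTail x ⬝ᵥ vecTail x := by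
        simp [dotProduct, Fin.sum_univ_succ, vecTail]
      rw [hx, ← fromBlocks_one, fromBlocks_smul]
      simp [fromBlocks_multiply, (hΓ (vecTail x)).2, add_smul, smul_smul, add_comm]

theorem exists_transpose_mul_self_eq_norm_sq_smul_one (n : ℕ) :
    ∃ (ι : Type) (_ : Fintype ι) (_ : DecidableEq ι) (_ : Nonempty ι)
      (Γ : EuclideanSpace ℝ (Fin n) →ₗ[ℝ] Matrix ι ι ℝ),
      ∀ x, (Γ x)ᵀ * Γ x = (‖x‖ ^ 2) • 1 := by
  obtain ⟨ι, hι, hdec, hne, Γ, hΓ⟩ := exists_isSymm_mul_self_eq_dotProduct_smul_one ℝ n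
  refine ⟨ι, hι, hdec, hne, Γ ∘ₗ (WithLp.linearEquiv 2 ℝ (Fin n → ℝ)).toLinearMap, fun x => ?_⟩
  have hx : x.ofLp ⬝ᵥ x.ofLp = ‖x‖ ^ 2 := by
    simp [EuclideanSpace.real_norm_sq_eq, dotProduct, ← sq]
  simp [(hΓ x.ofLp).1.eq, (hΓ x.ofLp).2, hx]

variable {R ι : Type*} [Fintype ι] [DecidableEq ι]

theorem transpose_mul_self_prod_ofFn [CommRing R] {k : ℕ} {M : Fin k → Matrix ι ι R}
    {c : Fin k → R} (hM : ∀ i, (M i)ᵀ * M i = c i • 1) :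
    (List.ofFn M).prodᵀ * (List.ofFn M).prod = (∏ i, c i) • 1 := by
  induction k with
  | zero => simp
  | succ k ih =>
    have htail := ih fun i => hM i.succ
    rw [List.ofFn_succ, List.prod_cons, transpose_mul, Fin.prod_univ_succ, Matrix.mul_assoc,
      ← Matrix.mul_assoc _ (M 0), hM 0, smul_mul_assoc, one_mul, mul_smul_comm, htail, smul_smul]

theorem sum_sq_col_of_transpose_mul_self_eq_smul_one [CommRing R] {M : Matrix ι ι R} {c : R}
    (hM : Mᵀ * M = c • 1) (q : ι) : ∑ p, M p q ^ 2 = c := by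
  have hqq : (Mᵀ * M) q q = c := by simp [hM]
  simpa [Matrix.mul_apply, sq] using hqq

end CliffordMatrices

section WordCoefficients

variable {n k : ℕ} {ι : Type*} [Fintype ι] [DecidableEq ι]
  {Γ : EuclideanSpace ℝ (Fin n) →ₗ[ℝ] Matrix ι ι ℝ}

/-- The multilinear form sending `(y₁, …, y_k)` to the `(p, q)` entry of `Γ y₁ * ⋯ * Γ y_k`. For a
Clifford system `Γ` these are bounded by `∏ i, ‖y i‖` and serve as coefficients of test tensors. -/
def wordCoeff (Γ : EuclideanSpace ℝ (Fin n) →ₗ[ℝ] Matrix ι ι ℝ) (k : ℕ) (p q : ι) :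
    MultilinearMap ℝ (fun _ : Fin k => EuclideanSpace ℝ (Fin n)) ℝ :=
  (Matrix.entryLinearMap ℝ ℝ p q).compMultilinearMap
    ((MultilinearMap.mkPiAlgebraFin ℝ k (Matrix ι ι ℝ)).compLinearMap fun _ => Γ)

theorem wordCoeff_apply (p q : ι) (y : Fin k → EuclideanSpace ℝ (Fin n)) :
    wordCoeff Γ k p q y = (List.ofFn fun i => Γ (y i)).prod p q := by
  simp [wordCoeff]

theorem sum_wordCoeff_sq (hΓ : ∀ x, (Γ x).transpose * Γ x = (‖x‖ ^ 2) • 1) (q : ι)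
    (y : Fin k → EuclideanSpace ℝ (Fin n)) :
    ∑ p, wordCoeff Γ k p q y ^ 2 = (∏ i, ‖y i‖) ^ 2 := by
  simp only [wordCoeff_apply, ← Finset.prod_pow]
  exact sum_sq_col_of_transpose_mul_self_eq_smul_one
    (transpose_mul_self_prod_ofFn fun i => hΓ (y i)) q

theorem abs_wordCoeff_le (hΓ : ∀ x, (Γ x).transpose * Γ x = (‖x‖ ^ 2) • 1) (p q : ι)
    (y : Fin k → EuclideanSpace ℝ (Fin n)) : |wordCoeff Γ k p q y| ≤ ∏ i, ‖y i‖ := by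
  refine abs_le_of_sq_le_sq ?_ (by positivity)
  rw [← sum_wordCoeff_sq hΓ q y]
  exact Finset.single_le_sum (f := fun p => wordCoeff Γ k p q y ^ 2)
    (fun _ _ => sq_nonneg _) (Finset.mem_univ p)

end WordCoefficients

theorem map_eq_sum_prod_repr_smul {R M N κ ι : Type*} [CommSemiring R] [AddCommMonoid M]
    [Module R M] [AddCommMonoid N] [Module R N] [Fintype κ] [Fintype ι] [DecidableEq κ]
    (b : Module.Basis ι R M)
    (X : MultilinearMap R (fun _ : κ => M) N) (y : κ → M) :
    X y = ∑ w : κ → ι, (∏ i, b.repr (y i) (w i)) • X fun i => b (w i) := by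
  calc X y = X fun i => ∑ j, b.repr (y i) j • b j := by simp only [b.sum_repr]
    _ = _ := by simp only [X.map_sum, X.map_smul_univ]

/-! ### Lorentz cones -/

section LorentzTest

open scoped InnerProductSpace

variable {n k : ℕ}

theorem exists_norm_le_inner_eq_of_mem_dualConeSet_lorentzCone
    {φ : Module.Dual ℝ (ℝ × EuclideanSpace ℝ (Fin n))} (hφ : φ ∈ dualConeSet (lorentzCone n)) :
    ∃ y : EuclideanSpace ℝ (Fin n), ‖y‖ ≤ φ (1, 0) ∧ ∀ x, φ (0, x) = ⟪y, x⟫_ℝ := by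
  let ψ := LinearMap.toContinuousLinearMap (φ ∘ₗ LinearMap.inr ℝ ℝ (EuclideanSpace ℝ (Fin n)))
  let y := (InnerProductSpace.toDual ℝ _).symm ψ
  have hy (x) : φ (0, x) = ⟪y, x⟫_ℝ := (InnerProductSpace.toDual_symm_apply (y := ψ)).symm
  refine ⟨y, ?_, hy⟩
  have h₀ : 0 ≤ φ (1, 0) := hφ _ (by simp [lorentzCone])
  have hmem : 0 ≤ φ (‖y‖, -y) := hφ _ (by simp [lorentzCone])
  have hsplit : φ (‖y‖, -y) = ‖y‖ * φ (1, 0) - ‖y‖ ^ 2 := by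
    have : ((‖y‖, -y) : ℝ × EuclideanSpace ℝ (Fin n)) = ‖y‖ • (1, 0) - (0, y) := by simp
    rw [this, map_sub, map_smul, hy, real_inner_self_eq_norm_sq, smul_eq_mul]
  by_contra! hlt
  nlinarith [norm_nonneg y]

/-- The tensor `e₀ ⊗ ⋯ ⊗ e₀ - ∑ X(e_{w₁}, …, e_{w_k}) e_{w₁} ⊗ ⋯ ⊗ e_{w_k}`, where `e₀` is the time
direction and `w` runs over words in the space directions. It lies in the maximal tensor power of
the Lorentz cone when `X` is bounded by the product of the norms. -/
def testTensor (X : MultilinearMap ℝ (fun _ : Fin k => EuclideanSpace ℝ (Fin n)) ℝ) :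
    ⨂[ℝ] _ : Fin k, ℝ × EuclideanSpace ℝ (Fin n) :=
  PiTensorProduct.tprod ℝ (fun _ => (1, 0)) -
    ∑ w : Fin k → Fin n, X (fun i => EuclideanSpace.single (w i) 1) •
      PiTensorProduct.tprod ℝ fun i => (0, EuclideanSpace.single (w i) 1)

/-- The functional `(t₁, x₁) ⊗ ⋯ ⊗ (t_k, x_k) ↦ t₁ ⋯ t_k + X(x₁, …, x_k)`, which is nonnegative on
the minimal tensor power of the Lorentz cone when `X` is bounded by the product of the norms. -/
def testFunctional (X : MultilinearMap ℝ (fun _ : Fin k => EuclideanSpace ℝ (Fin n)) ℝ) :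
    (⨂[ℝ] _ : Fin k, ℝ × EuclideanSpace ℝ (Fin n)) →ₗ[ℝ] ℝ :=
  dualPairing (fun _ => LinearMap.fst ℝ ℝ _) +
    PiTensorProduct.lift (X.compLinearMap fun _ => LinearMap.snd ℝ ℝ _)

variable {X : MultilinearMap ℝ (fun _ : Fin k => EuclideanSpace ℝ (Fin n)) ℝ}

theorem testTensor_mem_maxTensorPow (hX : ∀ y, |X y| ≤ ∏ i, ‖y i‖) :
    testTensor X ∈ maxTensorPow (lorentzCone n) k := by
  intro φ hφ
  choose y hnorm hinner using fun i =>
    exists_norm_le_inner_eq_of_mem_dualConeSet_lorentzCone (hφ i)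
  have heval : dualPairing φ (testTensor X) = ∏ i, φ i (1, 0) - X y := by
    rw [map_eq_sum_prod_repr_smul (EuclideanSpace.basisFun (Fin n) ℝ).toBasis X y]
    simp [testTensor, dualPairing_tprod, hinner, EuclideanSpace.inner_single_right, mul_comm]
  rw [heval, sub_nonneg]
  exact (le_abs_self _).trans ((hX y).trans
    (Finset.prod_le_prod (fun i _ => norm_nonneg _) fun i _ => hnorm i))

theorem testFunctional_tprod (x : Fin k → ℝ × EuclideanSpace ℝ (Fin n)) :
    testFunctional X (PiTensorProduct.tprod ℝ x) = ∏ i, (x i).1 + X fun i => (x i).2 := by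
  simp [testFunctional, dualPairing_tprod]

theorem testFunctional_tprod_nonneg (hX : ∀ y, |X y| ≤ ∏ i, ‖y i‖)
    {x : Fin k → ℝ × EuclideanSpace ℝ (Fin n)} (hx : ∀ i, x i ∈ lorentzCone n) :
    0 ≤ testFunctional X (PiTensorProduct.tprod ℝ x) := by
  rw [testFunctional_tprod]
  have hprod : ∏ i, ‖(x i).2‖ ≤ ∏ i, (x i).1 :=
    Finset.prod_le_prod (fun i _ => norm_nonneg _) fun i _ => hx i
  linarith [neg_abs_le (X fun i => (x i).2), hX fun i => (x i).2]

theorem testFunctional_map_testTensor (hk : 1 ≤ k)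
    {Q : (ℝ × EuclideanSpace ℝ (Fin n)) →ₗ[ℝ] ℝ × EuclideanSpace ℝ (Fin n)} {a : ℝ} {b : Fin n → ℝ}
    (htime : Q (1, 0) = a • (1, 0))
    (hspace : ∀ j, Q (0, EuclideanSpace.single j 1) = b j • (0, EuclideanSpace.single j 1)) :
    testFunctional X (PiTensorProduct.map (fun _ => Q) (testTensor X)) =
      a ^ k - ∑ w : Fin k → Fin n,
        X (fun i => EuclideanSpace.single (w i) 1) ^ 2 * ∏ i, b (w i) := by
  have : NeZero k := ⟨by omega⟩
  have hzero : (X fun _ => 0) = 0 := X.map_coord_zero 0 rfl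
  simp [testTensor, testFunctional_tprod, htime, hspace, hzero, MultilinearMap.map_smul_univ,
    -Prod.smul_mk, NeZero.ne k, sq, mul_comm, mul_left_comm]

end LorentzTest

theorem le_of_forall_pow_le_mul_pow {a b N : ℝ} (ha : 0 ≤ a)
    (h : ∀ k : ℕ, 1 ≤ k → b ^ k ≤ N * a ^ k) : b ≤ a := by
  by_contra! hab
  have hb : 0 < b := ha.trans_lt hab
  have hlim : Filter.Tendsto (fun k : ℕ => N * (a / b) ^ k) Filter.atTop (nhds (N * 0)) :=
    (tendsto_pow_atTop_nhds_zero_of_lt_one (by positivity) ((div_lt_one hb).2 hab)).const_mul N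
  have hge : (1 : ℝ) ≤ N * 0 := by
    refine ge_of_tendsto hlim (Filter.eventually_atTop.2 ⟨1, fun k hk => ?_⟩)
    rw [div_pow, ← mul_div_assoc, le_div_iff₀ (by positivity), one_mul]
    exact h k hk
  linarith

section LorentzTrace

variable {n k : ℕ} {P Q : (ℝ × EuclideanSpace ℝ (Fin n)) →ₗ[ℝ] ℝ × EuclideanSpace ℝ (Fin n)}
  {a : ℝ} {b : Fin n → ℝ}

theorem sum_sq_mul_prod_le_pow_of_isEntanglementAnnihilating
    (hann : IsEntanglementAnnihilating (lorentzCone n) (lorentzCone n) Q)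
    (htime : Q (1, 0) = a • (1, 0))
    (hspace : ∀ j, Q (0, EuclideanSpace.single j 1) = b j • (0, EuclideanSpace.single j 1))
    (hk : 1 ≤ k)
    {X : MultilinearMap ℝ (fun _ : Fin k => EuclideanSpace ℝ (Fin n)) ℝ}
    (hX : ∀ y, |X y| ≤ ∏ i, ‖y i‖) :
    ∑ w : Fin k → Fin n, X (fun i => EuclideanSpace.single (w i) 1) ^ 2 *
      ∏ i, b (w i) ≤ a ^ k := by
  rw [← sub_nonneg, ← testFunctional_map_testTensor hk htime hspace]
  exact nonneg_of_mem_minTensorPow (fun _ => testFunctional_tprod_nonneg hX)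
    (hann k hk (testTensor_mem_maxTensorPow hX))

theorem nonneg_add_sum_of_isEntanglementAnnihilating
    (hann : IsEntanglementAnnihilating (lorentzCone n) (lorentzCone n) Q)
    (htime : Q (1, 0) = a • (1, 0))
    (hspace : ∀ j, Q (0, EuclideanSpace.single j 1) = b j • (0, EuclideanSpace.single j 1)) :
    0 ≤ a + ∑ j, b j := by
  obtain ⟨ι, _, _, _, Γ, hΓ⟩ := exists_transpose_mul_self_eq_norm_sq_smul_one n
  have ha : 0 ≤ a := by
    simpa using sum_sq_mul_prod_le_pow_of_isEntanglementAnnihilating hann htime hspace le_rfl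
      (X := 0) fun y => by simp
  have hpow (k : ℕ) (hk : 1 ≤ k) : (∑ j, b j) ^ k ≤ Fintype.card ι * a ^ k := by
    let q : ι := Classical.arbitrary ι
    calc (∑ j, b j) ^ k
        = ∑ w : Fin k → Fin n, ∏ i, b (w i) := Fintype.sum_pow _ _
      _ = ∑ w : Fin k → Fin n, ∑ p,
            wordCoeff Γ k p q (fun i => EuclideanSpace.single (w i) 1) ^ 2 *
              ∏ i, b (w i) := by
          simp only [← Finset.sum_mul, sum_wordCoeff_sq hΓ, PiLp.norm_single, norm_one,
            Finset.prod_const_one, one_pow, one_mul]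
      _ ≤ ∑ _p : ι, a ^ k := by
          rw [Finset.sum_comm]
          exact Finset.sum_le_sum fun p _ =>
            sum_sq_mul_prod_le_pow_of_isEntanglementAnnihilating hann htime hspace hk
              (abs_wordCoeff_le hΓ p q)
      _ = Fintype.card ι * a ^ k := by simp
  -- The sign of `∑ j, b j` is unknown, so the comparison of powers is applied to squares.
  have hsq : (∑ j, b j) ^ 2 ≤ a ^ 2 :=
    le_of_forall_pow_le_mul_pow (sq_nonneg a) fun k hk => by
      simpa only [← pow_mul] using hpow (2 * k) (by omega)
  linarith [(abs_le.1 (abs_le_of_sq_le_sq hsq ha)).1]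

/-- The representation of `{±1}ⁿ` on `ℝ ⊕ ℝⁿ` that changes the signs of the space coordinates. Its
only intertwining maps are the diagonal ones. -/
def signFlip (n : ℕ) : Representation ℝ (Fin n → ℤˣ) (ℝ × EuclideanSpace ℝ (Fin n)) where
  toFun ε :=
    { toFun := fun v => (v.1, WithLp.toLp 2 fun j => ((ε j : ℤ) : ℝ) * v.2 j)
      map_add' := fun u v => by ext <;> simp [mul_add]
      map_smul' := fun c v => by ext <;> simp [mul_left_comm] }
  map_one' := by ext <;> simp
  map_mul' ε δ := by ext <;> simp [mul_assoc]

theorem signFlip_apply (ε : Fin n → ℤˣ) (v : ℝ × EuclideanSpace ℝ (Fin n)) :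
    signFlip n ε v = (v.1, WithLp.toLp 2 fun j => ((ε j : ℤ) : ℝ) * v.2 j) := rfl

theorem mapsTo_signFlip_lorentzCone (ε : Fin n → ℤˣ) :
    MapsTo (signFlip n ε) (lorentzCone n) (lorentzCone n) := by
  intro v hv
  have habs (j : Fin n) : |((ε j : ℤ) : ℝ)| = 1 := by
    rcases Int.units_eq_one_or (ε j) with h | h <;> simp [h]
  have hnorm : ‖(signFlip n ε v).2‖ = ‖v.2‖ := by
    simp [signFlip_apply, EuclideanSpace.norm_eq, habs]
  exact hnorm.le.trans hv

theorem exists_diagonal_of_isIntertwiningMap_signFlip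
    (hQ : (signFlip n).IsIntertwiningMap (signFlip n) Q) :
    ∃ (a : ℝ) (b : Fin n → ℝ), Q (1, 0) = a • (1, 0) ∧
      ∀ j, Q (0, EuclideanSpace.single j 1) = b j • (0, EuclideanSpace.single j 1) := by
  let r (j : Fin n) : Fin n → ℤˣ := Function.update 1 j (-1)
  have htime (j : Fin n) : signFlip n (r j) (1, 0) = (1, 0) := by
    ext <;> simp [signFlip_apply]
  have hspace (j : Fin n) : signFlip n (r j) (0, EuclideanSpace.single j 1) =
      -(0, EuclideanSpace.single j 1) := by
    ext l
    · simp [signFlip_apply]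
    · by_cases h : l = j <;> simp [signFlip_apply, r, h]
  have hQtime (j : Fin n) : (Q (1, 0)).2 j = 0 := by
    have h := congrArg (fun v => v.2 j) (hQ.isIntertwining (r j) (1, 0))
    simpa [htime, signFlip_apply, r, self_eq_neg] using h
  have hQspace (j : Fin n) : -Q (0, EuclideanSpace.single j 1) =
      signFlip n (r j) (Q (0, EuclideanSpace.single j 1)) := by
    rw [← hQ.isIntertwining, hspace, map_neg]
  have hQspace_fst (j : Fin n) : (Q (0, EuclideanSpace.single j 1)).1 = 0 := by
    simpa [signFlip_apply, neg_eq_self] using congrArg Prod.fst (hQspace j)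
  have hQspace_snd (j l : Fin n) (hl : l ≠ j) : (Q (0, EuclideanSpace.single j 1)).2 l = 0 := by
    simpa [signFlip_apply, r, hl, neg_eq_self] using congrArg (fun v => v.2 l) (hQspace j)
  refine ⟨(Q (1, 0)).1, fun j => (Q (0, EuclideanSpace.single j 1)).2 j, ?_, fun j => ?_⟩
  · ext j <;> simp [hQtime]
  · ext l
    · simp [hQspace_fst]
    · by_cases hl : l = j
      · simp [hl]
      · simp [hQspace_snd j l hl, hl]

theorem trace_eq_add_sum_of_diagonal
    (htime : Q (1, 0) = a • (1, 0))
    (hspace : ∀ j, Q (0, EuclideanSpace.single j 1) = b j • (0, EuclideanSpace.single j 1)) :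
    LinearMap.trace ℝ _ Q = a + ∑ j, b j := by
  rw [LinearMap.trace_eq_matrix_trace ℝ ((Module.Basis.singleton Unit ℝ).prod
    (EuclideanSpace.basisFun (Fin n) ℝ).toBasis), Matrix.trace, Fintype.sum_sum_type]
  simp [LinearMap.toMatrix_apply, htime, hspace]

theorem trace_nonneg_of_isEntanglementAnnihilating_lorentzCone
    (hP : IsEntanglementAnnihilating (lorentzCone n) (lorentzCone n) P) :
    0 ≤ LinearMap.trace ℝ _ P := by
  let : Invertible (Fintype.card (Fin n → ℤˣ) : ℝ) :=
    invertibleOfNonzero (Nat.cast_ne_zero.2 Fintype.card_ne_zero)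
  let ρ := signFlip n
  have hinv := Representation.averageMap_invariant (Representation.linHom ρ ρ) P
  obtain ⟨a, b, htime, hspace⟩ := exists_diagonal_of_isIntertwiningMap_signFlip
    ((Representation.mem_linHom_invariants_iff_isIntertwining _).1 hinv)
  rw [← trace_averageMap_linHom ρ P, trace_eq_add_sum_of_diagonal htime hspace]
  exact nonneg_add_sum_of_isEntanglementAnnihilating
    (hP.averageMap mapsTo_signFlip_lorentzCone mapsTo_signFlip_lorentzCone) htime hspace

end LorentzTrace

/-! ### Cones generated by compact sets -/

section ConicHull

variable {E : Type*} [AddCommGroup E] [Module ℝ E] {K : Set E}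

theorem convexHull_eq_iUnion_image_stdSimplex [FiniteDimensional ℝ E] :
    convexHull ℝ K = ⋃ m ∈ Finset.range (Module.finrank ℝ E + 2),
      (fun p : (Fin m → ℝ) × (Fin m → E) => ∑ i, p.1 i • p.2 i) ''
        (stdSimplex ℝ (Fin m) ×ˢ univ.pi fun _ => K) := by
  refine Subset.antisymm (fun x hx => ?_) (iUnion₂_subset fun m _ => ?_)
  · obtain ⟨ι, _, z, w, hz, hind, hw₀, hw₁, rfl⟩ := eq_pos_convex_span_of_mem_convexHull hx
    have hcard : Fintype.card ι ≤ Module.finrank ℝ E + 1 :=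
      hind.card_le_finrank_succ.trans (Nat.succ_le_succ (Submodule.finrank_le _))
    let e := Fintype.equivFin ι
    refine mem_biUnion (Finset.mem_range.2 (Nat.lt_succ_of_le hcard))
      ⟨(w ∘ e.symm, z ∘ e.symm), ⟨⟨fun i => (hw₀ _).le, ?_⟩, fun i _ => hz (mem_range_self _)⟩, ?_⟩
    · exact (e.symm.sum_comp w).trans hw₁
    · exact e.symm.sum_comp fun i => w i • z i
  · rintro _ ⟨p, ⟨hw, hz⟩, rfl⟩
    exact (convex_convexHull ℝ K).sum_mem (fun i _ => hw.1 i) hw.2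
      fun i _ => subset_convexHull ℝ K (hz i (mem_univ i))

open scoped Pointwise in
theorem mem_hull_iff_exists_smul_mem_convexHull (hK : K.Nonempty) {y : E} :
    y ∈ PointedCone.hull ℝ K ↔ ∃ t : ℝ, 0 ≤ t ∧ ∃ x ∈ convexHull ℝ K, t • x = y := by
  refine ⟨fun hy => ?_, ?_⟩
  · induction hy using Submodule.span_induction with
    | mem x hx => exact ⟨1, zero_le_one, x, subset_convexHull ℝ K hx, one_smul ℝ x⟩
    | zero => exact ⟨0, le_rfl, _, subset_convexHull ℝ K hK.some_mem, zero_smul ℝ _⟩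
    | add _ _ _ _ hx hy =>
      obtain ⟨s, hs, x, hx, rfl⟩ := hx
      obtain ⟨t, ht, y, hy, rfl⟩ := hy
      have hmem : s • x + t • y ∈ (s + t) • convexHull ℝ K := by
        rw [(convex_convexHull ℝ K).add_smul hs ht]
        exact add_mem_add (smul_mem_smul_set hx) (smul_mem_smul_set hy)
      exact ⟨s + t, add_nonneg hs ht, hmem⟩
    | smul c _ _ hx =>
      obtain ⟨t, ht, x, hx, rfl⟩ := hx
      exact ⟨c * t, mul_nonneg c.2 ht, x, hx, mul_smul _ _ _⟩
  · rintro ⟨t, ht, x, hx, rfl⟩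
    have hsub := convexHull_min PointedCone.subset_hull (PointedCone.hull ℝ K).convex
    exact (PointedCone.hull ℝ K).smul_mem ht (hsub hx)

theorem convex_diff_zero_of_salient {C : PointedCone ℝ E} (hC : (C : ConvexCone ℝ E).Salient) :
    Convex ℝ ((C : Set E) \ {0}) := by
  refine convex_iff_forall_pos.2 fun x hx y hy a b ha hb _ => ?_
  have hax : a • x ∈ C := C.smul_mem ha.le hx.1
  have hby : b • y ∈ C := C.smul_mem hb.le hy.1
  refine ⟨add_mem hax hby, fun hzero => hC _ hax (smul_ne_zero ha.ne' hx.2) ?_⟩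
  rwa [neg_eq_of_add_eq_zero_right hzero]

end ConicHull

section ConicHullNormed

variable {E : Type*} [NormedAddCommGroup E] [NormedSpace ℝ E] {K : Set E}

theorem isCompact_convexHull_of_isCompact [FiniteDimensional ℝ E] (hK : IsCompact K) :
    IsCompact (convexHull ℝ K) := by
  rw [convexHull_eq_iUnion_image_stdSimplex]
  refine Finset.isCompact_biUnion _ fun m _ => IsCompact.image ?_ (by fun_prop)
  exact (isCompact_stdSimplex ℝ (Fin m)).prod (isCompact_univ_pi fun _ => hK)

theorem coe_hull_eq_image_snd (hK : K.Nonempty) (h₀ : 0 ∉ convexHull ℝ K) :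
    (PointedCone.hull ℝ K : Set E) =
      (fun p : convexHull ℝ K × E => p.2) '' {p | ‖(p.1 : E)‖ • p.2 = ‖p.2‖ • (p.1 : E)} := by
  have hne (x : E) (hx : x ∈ convexHull ℝ K) : ‖x‖ ≠ 0 :=
    norm_ne_zero_iff.2 (ne_of_mem_of_not_mem hx h₀)
  ext y
  rw [SetLike.mem_coe, mem_hull_iff_exists_smul_mem_convexHull hK]
  constructor
  · rintro ⟨t, ht, x, hx, rfl⟩
    refine ⟨(⟨x, hx⟩, t • x), ?_, rfl⟩
    simp [norm_smul, abs_of_nonneg ht, smul_smul, mul_comm]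
  · rintro ⟨⟨⟨x, hx⟩, y⟩, hxy : ‖x‖ • y = ‖y‖ • x, rfl⟩
    refine ⟨‖x‖⁻¹ * ‖y‖, by positivity, x, hx, ?_⟩
    rw [mul_smul, ← hxy, inv_smul_smul₀ (hne x hx)]

theorem isClosed_hull_of_isCompact [FiniteDimensional ℝ E] (hK : IsCompact K)
    (h₀ : 0 ∉ convexHull ℝ K) : IsClosed (PointedCone.hull ℝ K : Set E) := by
  rcases K.eq_empty_or_nonempty with rfl | hne
  · simp
  have : CompactSpace (convexHull ℝ K) :=
    isCompact_iff_compactSpace.1 (isCompact_convexHull_of_isCompact hK)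
  rw [coe_hull_eq_image_snd hne h₀]
  exact isClosedMap_snd_of_compactSpace _ (isClosed_eq (by fun_prop) (by fun_prop))

/-- The unit vectors of a closed cone: in finite dimension, a compact set generating the cone. -/
def unitPart (C : ProperCone ℝ E) : Set E := C ∩ Metric.sphere 0 1

theorem isCompact_unitPart [FiniteDimensional ℝ E] (C : ProperCone ℝ E) :
    IsCompact (unitPart C) :=
  (isCompact_sphere 0 1).inter_left C.isClosed

theorem ne_zero_of_mem_unitPart {C : ProperCone ℝ E} {x : E} (hx : x ∈ unitPart C) : x ≠ 0 :=
  Metric.ne_of_mem_sphere hx.2 one_ne_zero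

theorem inv_norm_smul_mem_unitPart {C : ProperCone ℝ E} {x : E} (hx : x ∈ C) (hx₀ : x ≠ 0) :
    ‖x‖⁻¹ • x ∈ unitPart C :=
  ⟨C.smul_mem hx (by positivity), by simp [norm_smul, hx₀]⟩

theorem exists_forall_pos_of_salient [FiniteDimensional ℝ E] {C : ProperCone ℝ E}
    (hC : (C : ConvexCone ℝ E).Salient) :
    ∃ ψ : StrongDual ℝ E, ∀ x ∈ C, x ≠ 0 → 0 < ψ x := by
  have hsub : convexHull ℝ (unitPart C) ⊆ (C : Set E) \ {0} :=
    convexHull_min (fun x hx => ⟨hx.1, ne_zero_of_mem_unitPart hx⟩)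
      (convex_diff_zero_of_salient hC)
  obtain ⟨ψ, u, hu, hψ⟩ := geometric_hahn_banach_point_closed (convex_convexHull ℝ (unitPart C))
    (isCompact_convexHull_of_isCompact (isCompact_unitPart C)).isClosed fun h => (hsub h).2 rfl
  refine ⟨ψ, fun x hx hx₀ => ?_⟩
  have hpos : 0 < ‖x‖⁻¹ * ψ x := by
    simpa using
      hu.trans (hψ _ (subset_convexHull ℝ _ (inv_norm_smul_mem_unitPart hx hx₀)))
  exact pos_of_mul_pos_right hpos (by positivity)

end ConicHullNormed

/-! ### Entanglement breaking maps -/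

theorem exists_trace_comp_eq {k V W : Type*} [CommRing k] [AddCommGroup V] [Module k V]
    [Module.Free k V] [Module.Finite k V] [AddCommGroup W] [Module k W]
    (F : (V →ₗ[k] W) →ₗ[k] k) :
    ∃ Q : W →ₗ[k] V, ∀ P : V →ₗ[k] W, LinearMap.trace k V (Q ∘ₗ P) = F P := by
  let b := Module.Free.chooseBasis k V
  refine ⟨∑ i, (F ∘ₗ LinearMap.smulRightₗ (b.coord i)).smulRight (b i), fun P => ?_⟩
  have hP : ∑ i, (b.coord i).smulRight (P (b i)) = P :=
    b.ext fun j => by simp [Finsupp.single_apply]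
  calc LinearMap.trace k V ((∑ i, (F ∘ₗ LinearMap.smulRightₗ (b.coord i)).smulRight (b i)) ∘ₗ P)
    _ = LinearMap.trace k V
        (∑ i, ((F ∘ₗ LinearMap.smulRightₗ (b.coord i)) ∘ₗ P).smulRight (b i)) := by
      congr 1
      ext v
      simp
    _ = F (∑ i, (b.coord i).smulRight (P (b i))) := by
      rw [map_sum, map_sum]
      exact Finset.sum_congr rfl fun i _ => LinearMap.trace_smulRight _ _
    _ = F P := by rw [hP]

section EntanglementBreaking

variable {V W : Type*} [NormedAddCommGroup V] [NormedSpace ℝ V] [NormedAddCommGroup W]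
  [NormedSpace ℝ W]

theorem bipolar_coe_properCone (K : ProperCone ℝ V) : bipolar (K : Set V) = K := by
  refine Subset.antisymm (fun x hx => ?_) subset_bipolar
  by_contra hxK
  obtain ⟨φ, hφ, hφx⟩ := K.hyperplane_separation_point hxK
  exact hφx.not_ge (hx φ.toLinearMap hφ)

/-- The continuous functionals in the dual cone of `C`. In finite dimension this is
`dualConeSet C`, here as a closed cone in a normed space. -/
def strongDualCone (C : Set V) : ProperCone ℝ (StrongDual ℝ V) :=
  ⟨PointedCone.dual (topDualPairing ℝ V).flip C,
    PointedCone.isClosed_dual fun x => (ContinuousLinearMap.apply ℝ ℝ x).continuous⟩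

theorem salient_strongDualCone {C : Set V} (hC : Submodule.span ℝ C = ⊤) :
    (strongDualCone C : ConvexCone ℝ (StrongDual ℝ V)).Salient := by
  intro φ hφ hφ₀ hneg
  refine hφ₀ (ContinuousLinearMap.coe_injective (LinearMap.ext_on hC fun x hx => ?_))
  exact le_antisymm (neg_nonneg.1 (hneg hx)) (hφ hx)

/-- The rank-one maps `v ↦ φ(v) x` with `φ ∈ D` and `x ∈ C`. When `D` is the dual cone of `C₁`,
they generate the cone of `(C₁, C)`-entanglement breaking maps. -/
def rankOneMaps (D : Set (StrongDual ℝ V)) (C : Set W) : Set (V →L[ℝ] W) :=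
  image2 (fun φ x => φ.smulRight x) D C

variable {D : ProperCone ℝ (StrongDual ℝ V)} {C : ProperCone ℝ W}

theorem rankOneMaps_subset_hull_unitPart :
    rankOneMaps (D : Set (StrongDual ℝ V)) (C : Set W) ⊆
      PointedCone.hull ℝ (rankOneMaps (unitPart D) (unitPart C)) := by
  rintro _ ⟨φ, hφ, x, hx, rfl⟩
  rcases eq_or_ne φ 0 with rfl | hφ₀
  · simp
  rcases eq_or_ne x 0 with rfl | hx₀
  · simp
  have hsplit : φ.smulRight x = (‖φ‖ * ‖x‖) • (‖φ‖⁻¹ • φ).smulRight (‖x‖⁻¹ • x) := by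
    ext v
    simp only [smul_apply, ContinuousLinearMap.smulRight_apply, smul_smul,
      smul_eq_mul]
    congr 1
    field_simp [norm_ne_zero_iff.2 hφ₀, norm_ne_zero_iff.2 hx₀]
  simp only [hsplit]
  exact PointedCone.smul_mem _ (by positivity) (PointedCone.subset_hull (mem_image2_of_mem
    (inv_norm_smul_mem_unitPart hφ hφ₀) (inv_norm_smul_mem_unitPart hx hx₀)))

theorem isEntanglementBreaking_of_mem_hull_rankOneMaps {C₁ : Set V} {C₂ : Set W} {T : V →L[ℝ] W}
    (hT : T ∈ PointedCone.hull ℝ (rankOneMaps (strongDualCone C₁) C₂)) :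
    IsEntanglementBreaking C₁ C₂ T.toLinearMap := by
  obtain ⟨m, c, g, rfl⟩ := Submodule.mem_span_set'.1 hT
  choose φ hφ x hx hg using fun i => (g i).2
  refine ⟨m, fun i => (c i : ℝ) • (φ i).toLinearMap, x, fun i v hv => ?_, hx, fun v => ?_⟩
  · exact mul_nonneg (c i).2 (hφ i hv)
  · simp only [← hg, ContinuousLinearMap.coe_coe, sum_apply,
      LinearMap.smul_apply, smul_assoc]
    rfl

variable [FiniteDimensional ℝ V] [FiniteDimensional ℝ W]

theorem zero_notMem_convexHull_rankOneMaps_unitPart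
    (hD : (D : ConvexCone ℝ (StrongDual ℝ V)).Salient) (hC : (C : ConvexCone ℝ W).Salient) :
    0 ∉ convexHull ℝ (rankOneMaps (unitPart D) (unitPart C)) := by
  obtain ⟨Ψ, hΨ⟩ := exists_forall_pos_of_salient hD
  obtain ⟨ψ, hψ⟩ := exists_forall_pos_of_salient hC
  let F : (V →L[ℝ] W) →ₗ[ℝ] ℝ := (Ψ ∘L ContinuousLinearMap.compL ℝ V W ℝ ψ).toLinearMap
  have hsub : convexHull ℝ (rankOneMaps (unitPart D) (unitPart C)) ⊆ F ⁻¹' Ioi 0 := by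
    refine convexHull_min ?_ ((convex_Ioi 0).linear_preimage F)
    rintro _ ⟨φ, hφ, x, hx, rfl⟩
    have hcomp : ψ ∘L φ.smulRight x = ψ x • φ := by ext v; simp [mul_comm]
    have hpos : 0 < ψ x * Ψ φ := mul_pos (hψ x hx.1 (ne_zero_of_mem_unitPart hx))
      (hΨ φ hφ.1 (ne_zero_of_mem_unitPart hφ))
    simpa [F, hcomp] using hpos
  exact fun hmem => lt_irrefl (0 : ℝ) (by simpa using hsub hmem)

theorem isClosed_hull_rankOneMaps
    (hD : (D : ConvexCone ℝ (StrongDual ℝ V)).Salient) (hC : (C : ConvexCone ℝ W).Salient) :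
    IsClosed (PointedCone.hull ℝ (rankOneMaps (D : Set (StrongDual ℝ V)) (C : Set W)) :
      Set (V →L[ℝ] W)) := by
  have hcompact : IsCompact (rankOneMaps (unitPart D) (unitPart C)) := by
    rw [rankOneMaps, ← image_uncurry_prod]
    exact ((isCompact_unitPart D).prod (isCompact_unitPart C)).image
      (ContinuousLinearMap.smulRightL ℝ V W).continuous₂
  have hhull : PointedCone.hull ℝ (rankOneMaps (D : Set (StrongDual ℝ V)) (C : Set W)) =
      PointedCone.hull ℝ (rankOneMaps (unitPart D) (unitPart C)) :=
    le_antisymm (Submodule.span_le.2 rankOneMaps_subset_hull_unitPart)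
      (Submodule.span_mono (image2_subset inter_subset_left inter_subset_left))
  rw [hhull]
  exact isClosed_hull_of_isCompact hcompact (zero_notMem_convexHull_rankOneMaps_unitPart hD hC)

theorem exists_trace_comp_neg_of_not_isEntanglementBreaking {C₁ : Set V}
    (hC₁ : Submodule.span ℝ C₁ = ⊤) (hC : (C : ConvexCone ℝ W).Salient)
    {P : V →ₗ[ℝ] W} (hP : ¬ IsEntanglementBreaking C₁ (C : Set W) P) :
    ∃ Q : W →ₗ[ℝ] V, MapsTo Q C (bipolar C₁) ∧ LinearMap.trace ℝ V (Q ∘ₗ P) < 0 := by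
  let e : (V →ₗ[ℝ] W) ≃ₗ[ℝ] V →L[ℝ] W := LinearMap.toContinuousLinearMap
  let B : ProperCone ℝ (V →L[ℝ] W) :=
    ⟨PointedCone.hull ℝ (rankOneMaps (strongDualCone C₁) (C : Set W)),
      isClosed_hull_rankOneMaps (salient_strongDualCone hC₁) hC⟩
  have hPB : e P ∉ B := fun h => hP (isEntanglementBreaking_of_mem_hull_rankOneMaps h)
  obtain ⟨f, hf, hfP⟩ := B.hyperplane_separation_point hPB
  obtain ⟨Q, hQ⟩ := exists_trace_comp_eq (f.toLinearMap ∘ₗ e.toLinearMap)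
  refine ⟨Q, fun x hx φ hφ => ?_, (hQ P).trans_lt hfP⟩
  have hφx : e (φ.smulRight x) ∈ B :=
    PointedCone.subset_hull ⟨φ.toContinuousLinearMap, hφ, x, hx, rfl⟩
  have hcomp : Q ∘ₗ φ.smulRight x = φ.smulRight (Q x) := by ext; simp
  calc 0 ≤ f (e (φ.smulRight x)) := hf _ hφx
    _ = LinearMap.trace ℝ V (Q ∘ₗ φ.smulRight x) := (hQ _).symm
    _ = φ (Q x) := by rw [hcomp, LinearMap.trace_smulRight]

end EntanglementBreaking

theorem IsProperCone.exists_salient_properCone {V : Type*} [NormedAddCommGroup V]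
    [NormedSpace ℝ V] {C : Set V} (hC : IsProperCone C) :
    ∃ K : ProperCone ℝ V, (K : ConvexCone ℝ V).Salient ∧ (K : Set V) = C := by
  obtain ⟨hclosed, hconv, hsmul, -, hpointed⟩ := hC
  have hzero : (0 : V) ∈ C := (hpointed.ge rfl).1
  let K : PointedCone ℝ V :=
    { carrier := C
      zero_mem' := hzero
      add_mem' := fun {x y} hx hy => by
        have hmid : (1 / 2 : ℝ) • x + (1 / 2 : ℝ) • y ∈ C :=
          hconv hx hy (by norm_num) (by norm_num) (by norm_num)
        simpa [smul_smul] using hsmul two_pos hmid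
      smul_mem' := fun c x hx => by
        rcases c.2.eq_or_lt with hc | hc
        · simpa [show c = 0 from Subtype.ext hc.symm] using hzero
        · exact hsmul hc hx }
  exact ⟨⟨K, hclosed⟩, fun x hx hx₀ hneg => hx₀ (hpointed.le ⟨hx, hneg⟩), rfl⟩

theorem IsProperCone.span_eq_top {V : Type*} [NormedAddCommGroup V] [NormedSpace ℝ V]
    {C : Set V} (hC : IsProperCone C) : Submodule.span ℝ C = ⊤ := by
  refine eq_top_iff.2 fun v _ => ?_
  obtain ⟨x, hx, y, hy, rfl⟩ := hC.2.2.2.1 v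
  exact sub_mem (Submodule.subset_span hx) (Submodule.subset_span hy)

theorem isProperCone_lorentzCone (n : ℕ) : IsProperCone (lorentzCone n) := by
  refine ⟨isClosed_le (by fun_prop) (by fun_prop), ?_, fun c hc x hx => ?_, fun v => ?_, ?_⟩
  · simpa [lorentzCone] using convexOn_univ_norm.convex_epigraph.linear_preimage
      (LinearEquiv.prodComm ℝ ℝ (EuclideanSpace ℝ (Fin n))).toLinearMap
  · simpa [lorentzCone, norm_smul, abs_of_pos hc] using mul_le_mul_of_nonneg_left hx hc.le
  · refine ⟨(|v.1| + v.1 + ‖v.2‖, v.2), ?_, (|v.1| + ‖v.2‖, 0), ?_, by ext <;> simp⟩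
    · change ‖v.2‖ ≤ |v.1| + v.1 + ‖v.2‖
      linarith [neg_abs_le v.1]
    · change ‖(0 : EuclideanSpace ℝ (Fin n))‖ ≤ |v.1| + ‖v.2‖
      rw [norm_zero]
      positivity
  · refine Subset.antisymm (fun v ⟨hv, hneg⟩ => ?_) (by simp [lorentzCone])
    have hv : ‖v.2‖ ≤ v.1 := hv
    have hneg : ‖v.2‖ ≤ -v.1 := by simpa [lorentzCone] using hneg
    have hnorm := norm_nonneg v.2
    exact Prod.ext (by linarith : v.1 = 0) (norm_eq_zero.1 (by linarith))

theorem lorentz_pairs_resilient_general (n : ℕ) {V W : Type*} [NormedAddCommGroup V]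
    [NormedSpace ℝ V] [FiniteDimensional ℝ V] [NormedAddCommGroup W] [NormedSpace ℝ W]
    [FiniteDimensional ℝ W] (C : ProperCone ℝ V) (hC : (C : ConvexCone ℝ V).Salient)
    {D : Set W} (hD : Submodule.span ℝ D = ⊤) :
    IsResilientPair (lorentzCone n) (C : Set V) ∧ IsResilientPair D (lorentzCone n) := by
  obtain ⟨L, hL, hLn⟩ := (isProperCone_lorentzCone n).exists_salient_properCone
  constructor
  · intro P hP
    by_contra hEB
    obtain ⟨Q, hQ, htrace⟩ := exists_trace_comp_neg_of_not_isEntanglementBreaking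
      (isProperCone_lorentzCone n).span_eq_top hC hEB
    rw [← hLn, bipolar_coe_properCone, hLn] at hQ
    exact htrace.not_ge (trace_nonneg_of_isEntanglementAnnihilating_lorentzCone (hP.comp_left hQ))
  · intro P hP
    by_contra hEB
    obtain ⟨Q, hQ, htrace⟩ := exists_trace_comp_neg_of_not_isEntanglementBreaking hD hL
      (hLn ▸ hEB)
    rw [hLn] at hQ
    rw [LinearMap.trace_comp_comm'] at htrace
    exact htrace.not_ge (trace_nonneg_of_isEntanglementAnnihilating_lorentzCone (hP.comp_right hQ))

/-- **Theorem (Aubrun–Müller-Hermes).** For every `n ≥ 1` and every proper cone `C`,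
the pairs `(L_n, C)` and `(C, L_n)` are resilient; in particular `L_n` is resilient. -/
theorem lorentz_pairs_resilient (n : ℕ) (hn : 1 ≤ n)
    (V : Type) [NormedAddCommGroup V] [NormedSpace ℝ V] [FiniteDimensional ℝ V]
    (C : Set V) (hC : IsProperCone C) :
    IsResilientPair (lorentzCone n) C ∧ IsResilientPair C (lorentzCone n) ∧
      IsResilientPair (lorentzCone n) (lorentzCone n) := by
  obtain ⟨K, hK, rfl⟩ := hC.exists_salient_properCone
  obtain ⟨hleft, hright⟩ := lorentz_pairs_resilient_general n K hK hC.span_eq_top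
  exact ⟨hleft, hright, (lorentz_pairs_resilient_general n K hK
    (isProperCone_lorentzCone n).span_eq_top).2⟩

end
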